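/- Let H be a class of boolean functions on X. If TD(H) ≥ d (threshold dimension at least d), then LD(H) ≥ ⌊log₂ d⌋, and if LD(H) ≥ d then TD(H) ≥ ⌊log₂ d⌋. -/

import Mathlib

/-- `H` shatters some Littlestone tree of depth `d`. -/
def LDge {X : Type*} (H : Set (X → Bool)) (d : ℕ) : Prop :=
  ∃ x : List Bool → X, ∀ σ : List Bool, σ.length = d →
    ∃ h ∈ H, ∀ i : ℕ, ∀ hi : i < σ.length, h (x (σ.take i)) = σ.get ⟨i, hi⟩

/-- The Littlestone dimension of `H`, as an extended natural number. -/
noncomputable def Ldim {X : Type*} (H : Set (X → Bool)) : ℕ∞ :=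
  sSup {e : ℕ∞ | ∃ d : ℕ, e = d ∧ LDge H d}

/-- The threshold dimension of `H` is at least `d`. -/
def TDge {X : Type*} (H : Set (X → Bool)) (d : ℕ) : Prop :=
  ∃ (x : Fin d → X) (h : Fin d → X → Bool),
    (∀ i, h i ∈ H) ∧ ∀ i j, h i (x j) = decide (j ≤ i)

/-- The threshold dimension of `H`, as an extended natural number. -/
noncomputable def TDim {X : Type*} (H : Set (X → Bool)) : ℕ∞ :=
  sSup {e : ℕ∞ | ∃ d : ℕ, e = d ∧ TDge H d}

/-!
From thresholds to trees: the middle point of a threshold sequence splits `H` into two subclasses,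
each with half of the thresholds, so binary search yields a tree.

From trees to thresholds: fix any `g ∈ H` and colour the nodes of the tree by the value of `g`.
A Ramsey argument gives a subtree of half the depth on which `g` is a constant `b`. Its root `y`
together with `g` extends every threshold sequence found in the subtree of functions that take the
value `!b` at `y`: on the left if `b = false`, and on the right if `b = true`.
-/

section

variable {X : Type*} {P Q : Set X} {H K : Set (X → Bool)} {k m n d : ℕ}

theorem ldge_zero_iff : LDge H 0 ↔ Nonempty X ∧ H.Nonempty := by
  constructor
  · rintro ⟨x, hx⟩
    obtain ⟨h, hh, -⟩ := hx [] rfl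
    exact ⟨⟨x []⟩, h, hh⟩
  · rintro ⟨⟨x⟩, h, hh⟩
    exact ⟨fun _ => x, fun σ hσ => ⟨h, hh, fun i hi => by omega⟩⟩

theorem ldge_succ_iff : LDge H (n + 1) ↔ ∃ x, ∀ b, LDge {h ∈ H | h x = b} n := by
  constructor
  · rintro ⟨x, hx⟩
    refine ⟨x [], fun b => ⟨fun σ => x (b :: σ), fun σ hσ => ?_⟩⟩
    obtain ⟨h, hh, hpath⟩ := hx (b :: σ) (by simpa using hσ)
    exact ⟨h, ⟨hh, by simpa using hpath 0 (by simp)⟩,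
      fun i hi => by simpa using hpath (i + 1) (by simpa using hi)⟩
  · rintro ⟨root, hsub⟩
    choose x hx using hsub
    refine ⟨fun | [] => root | b :: σ => x b σ, ?_⟩
    rintro (_ | ⟨b, σ⟩) hσ
    · simp at hσ
    · obtain ⟨h, ⟨hh, hroot⟩, hpath⟩ := hx b σ (by simpa using hσ)
      refine ⟨h, hh, ?_⟩
      rintro (_ | i) hi
      · simpa using hroot
      · simpa using hpath i (by simpa using hi)

theorem TDge.exists_split (hH : TDge H (m + (n + 1))) :
    ∃ x, TDge {h ∈ H | h x = false} m ∧ TDge {h ∈ H | h x = true} (n + 1) := by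
  obtain ⟨x, h, hh, hx⟩ := hH
  refine ⟨x (Fin.natAdd m 0),
    ⟨x ∘ Fin.castAdd (n + 1), h ∘ Fin.castAdd (n + 1), fun i => ⟨hh _, ?_⟩, fun i j => ?_⟩,
    ⟨x ∘ Fin.natAdd m, h ∘ Fin.natAdd m, fun i => ⟨hh _, ?_⟩, fun i j => ?_⟩⟩
  · simp only [Function.comp_apply, hx, decide_eq_false_iff_not, not_le]
    exact i.isLt
  · simp [hx, (Fin.strictMono_castAdd _).le_iff_le]
  · simp [hx]
  · simp [hx]

theorem TDge.ldge_of_two_pow_le (hH : TDge H d) (hk : 2 ^ k ≤ d) : LDge H k := by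
  induction k generalizing H d with
  | zero =>
    obtain ⟨x, h, hh, -⟩ := hH
    exact ldge_zero_iff.2 ⟨⟨x ⟨0, hk⟩⟩, h ⟨0, hk⟩, hh _⟩
  | succ k ih =>
    obtain ⟨n, rfl⟩ : ∃ n, d = 2 ^ k + (n + 1) :=
      ⟨d - 2 ^ k - 1, by have := Nat.two_pow_pos k; omega⟩
    obtain ⟨x, hfalse, htrue⟩ := hH.exists_split
    exact ldge_succ_iff.2 ⟨x, Bool.forall_bool.2 ⟨ih hfalse le_rfl, ih htrue (by omega)⟩⟩

/-- `H` shatters a Littlestone tree of depth `n` whose nodes are labelled by points of `P`.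
Unlike `LDge`, this is recursive in the tree and keeps track of the labels, as the Ramsey argument
requires. -/
def ShattersTree (P : Set X) : Set (X → Bool) → ℕ → Prop
  | H, 0 => H.Nonempty
  | H, n + 1 => ∃ x ∈ P, ∀ b, ShattersTree P {h ∈ H | h x = b} n

theorem LDge.shattersTree (hH : LDge H n) : ShattersTree Set.univ H n := by
  induction n generalizing H with
  | zero => exact (ldge_zero_iff.1 hH).2
  | succ n ih =>
    obtain ⟨x, hx⟩ := ldge_succ_iff.1 hH
    exact ⟨x, Set.mem_univ x, fun b => ih (hx b)⟩

namespace ShattersTree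

theorem mono (hHK : H ⊆ K) (hH : ShattersTree P H n) : ShattersTree P K n := by
  induction n generalizing H K with
  | zero => exact Set.Nonempty.mono hHK hH
  | succ n ih =>
    obtain ⟨x, hx, hsub⟩ := hH
    exact ⟨x, hx, fun b => ih (fun _ hh => ⟨hHK hh.1, hh.2⟩) (hsub b)⟩

theorem nonempty (hH : ShattersTree P H n) : H.Nonempty := by
  induction n generalizing H with
  | zero => exact hH
  | succ n ih =>
    obtain ⟨x, -, hsub⟩ := hH
    exact (ih (hsub true)).mono (Set.sep_subset _ _)

theorem succ_or_of_forall {x : X} (hx : x ∈ P)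
    (hsub : ∀ b, ShattersTree P {h ∈ H | h x = b} m ∨ ShattersTree Q {h ∈ H | h x = b} k) :
    ShattersTree P H (m + 1) ∨ ShattersTree Q H k := by
  by_cases hP : ∀ b, ShattersTree P {h ∈ H | h x = b} m
  · exact .inl ⟨x, hx, hP⟩
  · obtain ⟨b, hb⟩ := not_forall.1 hP
    exact .inr (((hsub b).resolve_left hb).mono (Set.sep_subset _ _))

theorem or_of_union (hH : ShattersTree (P ∪ Q) H n) (hmk : m + k ≤ n + 1) :
    ShattersTree P H m ∨ ShattersTree Q H k := by
  induction n generalizing H m k with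
  | zero =>
    obtain rfl | rfl : m = 0 ∨ k = 0 := by omega
    · exact .inl hH.nonempty
    · exact .inr hH.nonempty
  | succ n ih =>
    rcases m with _ | m
    · exact .inl hH.nonempty
    rcases k with _ | k
    · exact .inr hH.nonempty
    obtain ⟨x, hxP | hxQ, hsub⟩ := hH
    · exact succ_or_of_forall hxP fun b => ih (hsub b) (by omega)
    · exact (succ_or_of_forall hxQ fun b => (ih (hsub b) (by omega)).symm).symm

theorem exists_monochromatic (c : X → Bool) (hH : ShattersTree P H n) (hm : m + m ≤ n + 1) :
    ∃ b, ShattersTree {x ∈ P | c x = b} H m := by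
  have hP : P = {x ∈ P | c x = false} ∪ {x ∈ P | c x = true} := by
    ext x
    cases hx : c x <;> simp [hx]
  rw [hP] at hH
  exact Bool.exists_bool.2 (hH.or_of_union hm)

end ShattersTree

/-- `P` contains points `x₀, …, xₖ₋₁` and `H` contains functions `h₀, …, hₖ` with `hᵢ(xⱼ) = 1` iff
`j < i`. Compared with `TDge`, there is one more function, the one vanishing at all the points;
this makes the notion symmetric, so that a sequence can be extended on either side. -/
def HasThresholds (P : Set X) (H : Set (X → Bool)) (k : ℕ) : Prop :=
  ∃ (x : Fin k → X) (h : Fin (k + 1) → X → Bool),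
    (∀ j, x j ∈ P) ∧ (∀ i, h i ∈ H) ∧ ∀ i j, h i (x j) = decide (j.castSucc < i)

namespace HasThresholds

theorem tdge (hH : HasThresholds P H k) : TDge H k := by
  obtain ⟨x, h, -, hh, hxh⟩ := hH
  exact ⟨x, h ∘ Fin.succ, fun i => hh _, fun i j => by simp [hxh, Fin.castSucc_lt_succ_iff]⟩

theorem zero (hH : H.Nonempty) : HasThresholds P H 0 := by
  obtain ⟨g, hg⟩ := hH
  exact ⟨Fin.elim0, fun _ => g, fun j => j.elim0, fun _ => hg, fun _ j => j.elim0⟩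

theorem cons {y : X} {g : X → Bool} (hy : y ∈ P) (hg : g ∈ H) (hgy : g y = false)
    (hH : HasThresholds {x ∈ P | g x = false} {h ∈ H | h y = true} k) :
    HasThresholds P H (k + 1) := by
  obtain ⟨x, h, hx, hh, hxh⟩ := hH
  refine ⟨Fin.cons y x, Fin.cons g h, Fin.cases hy fun j => (hx j).1,
    Fin.cases hg fun i => (hh i).1, ?_⟩
  refine Fin.cases (Fin.cases ?_ fun j => ?_) fun i => Fin.cases ?_ fun j => ?_
  · simpa using hgy
  · simpa using (hx j).2
  · simpa using (hh i).2
  · simpa [← Fin.succ_castSucc] using hxh i j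

theorem snoc {y : X} {g : X → Bool} (hy : y ∈ P) (hg : g ∈ H) (hgy : g y = true)
    (hH : HasThresholds {x ∈ P | g x = true} {h ∈ H | h y = false} k) :
    HasThresholds P H (k + 1) := by
  obtain ⟨x, h, hx, hh, hxh⟩ := hH
  refine ⟨Fin.snoc x y, Fin.snoc h g,
    Fin.lastCases (by simpa using hy) fun j => by simpa using (hx j).1,
    Fin.lastCases (by simpa using hg) fun i => by simpa using (hh i).1, ?_⟩
  refine Fin.lastCases (Fin.lastCases ?_ fun j => ?_) fun i => Fin.lastCases ?_ fun j => ?_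
  · simpa [Fin.castSucc_lt_last] using hgy
  · simpa [Fin.castSucc_lt_last] using (hx j).2
  · simpa [(Fin.le_last i).not_gt] using (hh i).2
  · simpa using hxh i j

end HasThresholds

theorem ShattersTree.hasThresholds (hH : ShattersTree P H n) (hk : 2 ^ k ≤ n + 1) :
    HasThresholds P H k := by
  induction k generalizing n P H with
  | zero => exact .zero hH.nonempty
  | succ k ih =>
    obtain ⟨g, hg⟩ := hH.nonempty
    obtain ⟨m, hm⟩ : ∃ m, 2 ^ k = m + 1 := Nat.exists_eq_add_one.2 (Nat.two_pow_pos k)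
    obtain ⟨b, y, ⟨hy, hgy⟩, hsub⟩ := hH.exists_monochromatic g (m := m + 1) (by omega)
    have hthr := ih (hsub !b) hm.le
    cases b with
    | false => exact .cons hy hg hgy hthr
    | true => exact .snoc hy hg hgy hthr

theorem LDge.tdge_of_two_pow_le (hH : LDge H d) (hk : 2 ^ k ≤ d + 1) : TDge H k :=
  (hH.shattersTree.hasThresholds hk).tdge

end

theorem natCast_le_sSup_iff {S : Set ℕ∞} {d : ℕ} (hd : d ≠ 0) :
    (d : ℕ∞) ≤ sSup S ↔ ∃ e ∈ S, (d : ℕ∞) ≤ e := by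
  obtain ⟨m, rfl⟩ := Nat.exists_eq_add_one_of_ne_zero hd
  simp [ENat.natCast_add_one_le_iff, lt_sSup_iff]

/-- If `TD(H) ≥ d` then `LD(H) ≥ ⌊log₂ d⌋`, and if `LD(H) ≥ d` then `TD(H) ≥ ⌊log₂ d⌋`. -/
theorem threshold_littlestone_relation {X : Type*} (H : Set (X → Bool)) (d : ℕ) :
    ((d : ℕ∞) ≤ TDim H → (Nat.log 2 d : ℕ∞) ≤ Ldim H) ∧
    ((d : ℕ∞) ≤ Ldim H → (Nat.log 2 d : ℕ∞) ≤ TDim H) := by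
  rcases eq_or_ne d 0 with rfl | hd
  · simp
  have hlog : 2 ^ Nat.log 2 d ≤ d := Nat.pow_log_le_self 2 hd
  constructor
  · intro hT
    obtain ⟨_, ⟨n, rfl, hn⟩, hdn⟩ := (natCast_le_sSup_iff hd).1 hT
    have hdn : d ≤ n := Nat.cast_le.1 hdn
    exact le_sSup ⟨_, rfl, hn.ldge_of_two_pow_le (hlog.trans hdn)⟩
  · intro hL
    obtain ⟨_, ⟨n, rfl, hn⟩, hdn⟩ := (natCast_le_sSup_iff hd).1 hL
    have hdn : d ≤ n := Nat.cast_le.1 hdn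
    exact le_sSup ⟨_, rfl, hn.tdge_of_two_pow_le (by omega)⟩
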